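/- (Minkowski's inequality, Blaschke's proof via the stutzfunction.) Let H : ℝ³∖{0} → ℝ be smooth and homogeneous of degree 0, write H(θ,φ) := H(ℓ(θ,φ)), and define M := ∫₀^{2π} ∫₀^{π} H sinθ dθ dφ and A := ∫₀^{2π} ∫₀^{π} (H² − (1/2)((∂_θ H)² + (1/sin²θ)(∂_φ H)²)) sinθ dθ dφ. Then M² ≥ 4πA, with equality if and only if there exist c ∈ ℝ and a ∈ ℝ³ such that H(θ,φ) = c + a·ℓ(θ,φ) for all θ ∈ (0,π), φ (i.e. H is constant plus a combination of first spherical harmonics, corresponding to a round sphere with translated origin). -/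

import Mathlib

noncomputable section

/-- The unit radial vector `ℓ(θ,φ) = (sinθ cosφ, sinθ sinφ, cosθ)` in `ℝ³`. -/
def sphL (θ φ : ℝ) : Fin 3 → ℝ :=
  ![Real.sin θ * Real.cos φ, Real.sin θ * Real.sin φ, Real.cos θ]

/-- The stutzfunction as a function of the spherical coordinates: `H(θ,φ) = H(ℓ(θ,φ))`. -/
def Hsph (H : (Fin 3 → ℝ) → ℝ) (θ φ : ℝ) : ℝ := H (sphL θ φ)

open Real Set Filter Topology

/-!
The deficit `M² - 4πA` is `2π` times the integral of `|∇G|² - 2 G²` over the sphere, where `G` is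
`H` minus its mean, so the claim is the sharp Poincaré inequality on the sphere, whose equality case
is the space of first spherical harmonics. Split `G` into its mean over each circle of latitude and
the remainder; the integral splits accordingly.

For the remainder, Wirtinger's inequality on each latitude bounds the integrand below by a total
derivative in `θ` that vanishes at both poles, plus a square. The latitude means satisfy a
one-dimensional inequality with weight `sin θ`. This inequality and Wirtinger's are both instances
of Jacobi's identity
`p u'² - q u² = (p s' u² / s)' + p (u' - u s' / s)²` for a solution `s` of `(p s')' + q s = 0`.
-/

/-! ### Jacobi's identity for Sturm–Liouville equations -/

theorem sub_le_integral_of_hasDerivAt_le {a b : ℝ} {g g' q : ℝ → ℝ} (hab : a ≤ b)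
    (hg : ∀ x ∈ Icc a b, HasDerivAt g (g' x) x) (hq : Continuous q)
    (hle : ∀ x ∈ Ioo a b, g' x ≤ q x) :
    g b - g a ≤ ∫ x in a..b, q x :=
  intervalIntegral.sub_le_integral_of_hasDeriv_right_of_le hab
    (fun x hx => (hg x hx).continuousAt.continuousWithinAt)
    (fun x hx => (hg x (Ioo_subset_Icc_self hx)).hasDerivWithinAt) hq.integrableOn_Icc hle

theorem eqOn_of_integral_eq_sub_of_hasDerivAt_le {a b : ℝ} {g g' q : ℝ → ℝ}
    (hg : ∀ x ∈ Icc a b, HasDerivAt g (g' x) x) (hq : Continuous q)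
    (hle : ∀ x ∈ Ioo a b, g' x ≤ q x) (heq : ∫ x in a..b, q x = g b - g a) :
    EqOn g' q (Ioo a b) := by
  have sub_le {c d : ℝ} (hac : a ≤ c) (hcd : c ≤ d) (hdb : d ≤ b) :
      g d - g c ≤ ∫ x in c..d, q x :=
    sub_le_integral_of_hasDerivAt_le hcd (fun x hx => hg x (Icc_subset_Icc hac hdb hx)) hq
      fun x hx => hle x (Ioo_subset_Ioo hac hdb hx)
  have g_eq : ∀ y ∈ Ioo a b, g y = g a + ∫ x in a..y, q x := by
    intro y hy
    have split := intervalIntegral.integral_add_adjacent_intervals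
      (hq.intervalIntegrable (μ := MeasureTheory.volume) a y) (hq.intervalIntegrable y b)
    linarith [sub_le le_rfl hy.1.le hy.2.le, sub_le hy.1.le hy.2.le le_rfl]
  intro x hx
  have g_eventuallyEq : g =ᶠ[𝓝 x] fun y => g a + ∫ x in a..y, q x :=
    eventually_of_mem (Ioo_mem_nhds hx.1 hx.2) g_eq
  exact (hg x (Ioo_subset_Icc_self hx)).unique
    (((hq.integral_hasStrictDerivAt a x).hasDerivAt.const_add (g a)).congr_of_eventuallyEq
      g_eventuallyEq)

theorem eqOn_zero_of_integral_sq_eq_zero {a b : ℝ} {f : ℝ → ℝ} (hab : a < b) (hf : Continuous f)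
    (h : ∫ x in a..b, f x ^ 2 = 0) : EqOn f 0 (Icc a b) := by
  intro x hx
  by_contra hne
  have pos : 0 < ∫ x in a..b, f x ^ 2 :=
    intervalIntegral.integral_pos hab (by fun_prop) (fun _ _ => sq_nonneg _)
      ⟨x, hx, sq_pos_of_ne_zero hne⟩
  exact pos.ne' h

theorem hasDerivAt_sq_div_of_eq_zero {u s : ℝ → ℝ} {x u₁ s₁ : ℝ} (hu : HasDerivAt u u₁ x)
    (hs : HasDerivAt s s₁ x) (hux : u x = 0) (hsx : s x = 0) (hs₁ : s₁ ≠ 0) :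
    HasDerivAt (fun y => u y ^ 2 / s y) (u₁ ^ 2 / s₁) x := by
  rw [hasDerivAt_iff_tendsto_slope] at hu hs ⊢
  refine ((hu.pow 2).div hs hs₁).congr' ?_
  filter_upwards [self_mem_nhdsWithin] with y hy
  have hyx : y - x ≠ 0 := sub_ne_zero.2 hy
  simp only [Pi.div_apply, slope_def_field, hux, hsx, sub_zero, div_zero]
  field_simp

theorem exists_eqOn_const_mul_of_wronskian_eq_zero {a b : ℝ} {u u' s s' : ℝ → ℝ}
    (hu : ∀ x ∈ Ioo a b, HasDerivAt u (u' x) x) (hs : ∀ x ∈ Ioo a b, HasDerivAt s (s' x) x)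
    (hs₀ : ∀ x ∈ Ioo a b, s x ≠ 0) (hW : ∀ x ∈ Ioo a b, u' x * s x = u x * s' x) :
    ∃ k, ∀ x ∈ Ioo a b, u x = k * s x := by
  have deriv_div : ∀ x ∈ Ioo a b, HasDerivAt (fun y => u y / s y) 0 x := fun x hx =>
    ((hu x hx).div (hs x hx) (hs₀ x hx)).congr_deriv (by rw [hW x hx]; ring)
  rcases (Ioo a b).eq_empty_or_nonempty with hempty | ⟨y, hy⟩
  · exact ⟨0, by simp [hempty]⟩
  · refine ⟨u y / s y, fun x hx => ?_⟩
    rw [← div_eq_iff (hs₀ x hx)]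
    exact isOpen_Ioo.is_const_of_deriv_eq_zero isPreconnected_Ioo
      (fun z hz => (deriv_div z hz).differentiableAt.differentiableWithinAt)
      (fun z hz => (deriv_div z hz).deriv) hx hy

theorem exists_eqOn_const_mul_of_wronskian_eq_zero_of_zero {a m b : ℝ} {u u' s s' : ℝ → ℝ}
    (hm : m ∈ Ioo a b) (hu : ∀ x ∈ Ioo a b, HasDerivAt u (u' x) x)
    (hs : ∀ x ∈ Ioo a b, HasDerivAt s (s' x) x)
    (hum : u m = 0) (hsm : s m = 0) (hs'm : s' m ≠ 0) (hs₀ : ∀ x ∈ Ioo a b, s x = 0 → x = m)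
    (hW : ∀ x ∈ Ioo a b, u' x * s x = u x * s' x) :
    ∃ k, ∀ x ∈ Ioo a b, u x = k * s x := by
  have left_subset : Ioo a m ⊆ Ioo a b := Ioo_subset_Ioo_right hm.2.le
  have right_subset : Ioo m b ⊆ Ioo a b := Ioo_subset_Ioo_left hm.1.le
  obtain ⟨k₁, hk₁⟩ := exists_eqOn_const_mul_of_wronskian_eq_zero
    (fun x hx => hu x (left_subset hx)) (fun x hx => hs x (left_subset hx))
    (fun x hx h => hx.2.ne (hs₀ x (left_subset hx) h)) fun x hx => hW x (left_subset hx)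
  obtain ⟨k₂, hk₂⟩ := exists_eqOn_const_mul_of_wronskian_eq_zero
    (fun x hx => hu x (right_subset hx)) (fun x hx => hs x (right_subset hx))
    (fun x hx h => hx.1.ne' (hs₀ x (right_subset hx) h)) fun x hx => hW x (right_subset hx)
  have u_left : ∀ x ∈ Ioc a m, u x = k₁ * s x := fun x hx =>
    hx.2.eq_or_lt.elim (fun h => by simp [h, hum, hsm]) fun h => hk₁ x ⟨hx.1, h⟩
  have u_right : ∀ x ∈ Ico m b, u x = k₂ * s x := fun x hx =>
    hx.1.eq_or_lt.elim (fun h => by simp [← h, hum, hsm]) fun h => hk₂ x ⟨h, hx.2⟩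
  have deriv_eq {k : ℝ} {t : Set ℝ} (ht : UniqueDiffOn ℝ t) (hmt : m ∈ t)
      (h : ∀ x ∈ t, u x = k * s x) : u' m = k * s' m :=
    (ht m hmt).eq_deriv _ (hu m hm).hasDerivWithinAt
      (((hs m hm).const_mul k).hasDerivWithinAt.congr h (h m hmt))
  have k_eq : k₁ = k₂ := mul_right_cancel₀ hs'm <|
    (deriv_eq (uniqueDiffOn_Ioc a m) ⟨hm.1, le_rfl⟩ u_left).symm.trans
      (deriv_eq (uniqueDiffOn_Ico m b) ⟨le_rfl, hm.2⟩ u_right)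
  exact ⟨k₁, fun x hx => (le_total x m).elim (fun h => u_left x ⟨hx.1, h⟩)
    fun h => k_eq ▸ u_right x ⟨h, hx.2⟩⟩

/-- `s` is a solution, with derivative `s'`, of the Sturm–Liouville equation `(p s')' + q s = 0`. -/
structure IsSturmLiouvilleSolution (p q s s' : ℝ → ℝ) : Prop where
  hasDerivAt : ∀ x, HasDerivAt s (s' x) x
  hasDerivAt_mul_deriv : ∀ x, HasDerivAt (fun y => p y * s' y) (-(q x * s x)) x

namespace IsSturmLiouvilleSolution

variable {p q s s' u u' : ℝ → ℝ} {a m b : ℝ}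

-- At a zero of `s` the quotient in the last term is `0` by convention, and this is the right value.
theorem hasDerivAt_jacobi (h : IsSturmLiouvilleSolution p q s s') {x : ℝ}
    (hu : HasDerivAt u (u' x) x) (hz : s x = 0 → u x = 0 ∧ s' x ≠ 0) :
    HasDerivAt (fun y => p y * s' y * (u y ^ 2 / s y))
      (p x * u' x ^ 2 - q x * u x ^ 2 - p x * ((u' x * s x - u x * s' x) / s x) ^ 2) x := by
  by_cases hsx : s x = 0
  · obtain ⟨hux, hs'x⟩ := hz hsx
    refine ((h.hasDerivAt_mul_deriv x).mul
      (hasDerivAt_sq_div_of_eq_zero hu (h.hasDerivAt x) hux hsx hs'x)).congr_deriv ?_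
    simp only [hux, hsx]
    field_simp
    ring
  · refine ((h.hasDerivAt_mul_deriv x).mul
      ((hu.pow 2).div (h.hasDerivAt x) hsx)).congr_deriv ?_
    simp only [Pi.div_apply, Pi.pow_apply]
    field_simp
    ring

theorem integral_nonneg_and_wronskian_eq_zero (h : IsSturmLiouvilleSolution p q s s')
    (hab : a ≤ b) (hp : Continuous p) (hq : Continuous q) (hp₀ : ∀ x ∈ Ioo a b, 0 < p x)
    (hu : ∀ x, HasDerivAt u (u' x) x) (hu' : Continuous u')
    (hz : ∀ x ∈ Icc a b, s x = 0 → u x = 0 ∧ s' x ≠ 0)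
    (ha : p a = 0 ∨ u a = 0) (hb : p b = 0 ∨ u b = 0) :
    0 ≤ ∫ x in a..b, (p x * u' x ^ 2 - q x * u x ^ 2) ∧
      (∫ x in a..b, (p x * u' x ^ 2 - q x * u x ^ 2) = 0 →
        ∀ x ∈ Ioo a b, u' x * s x = u x * s' x) := by
  have u_cont : Continuous u := continuous_iff_continuousAt.2 fun x => (hu x).continuousAt
  have integrand_cont : Continuous fun x => p x * u' x ^ 2 - q x * u x ^ 2 := by fun_prop
  have jacobi : ∀ x ∈ Icc a b, HasDerivAt (fun y => p y * s' y * (u y ^ 2 / s y)) _ x :=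
    fun x hx => h.hasDerivAt_jacobi (hu x) (hz x hx)
  have square_nonneg : ∀ x ∈ Ioo a b, 0 ≤ p x * ((u' x * s x - u x * s' x) / s x) ^ 2 :=
    fun x hx => mul_nonneg (hp₀ x hx).le (sq_nonneg _)
  have deriv_le : ∀ x ∈ Ioo a b, p x * u' x ^ 2 - q x * u x ^ 2
      - p x * ((u' x * s x - u x * s' x) / s x) ^ 2 ≤ p x * u' x ^ 2 - q x * u x ^ 2 :=
    fun x hx => sub_le_self _ (square_nonneg x hx)
  have boundary {y : ℝ} (hy : p y = 0 ∨ u y = 0) : p y * s' y * (u y ^ 2 / s y) = 0 := by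
    rcases hy with hy | hy <;> simp [hy]
  constructor
  · simpa only [boundary ha, boundary hb, sub_zero] using
      sub_le_integral_of_hasDerivAt_le hab jacobi integrand_cont deriv_le
  · intro hzero x hx
    have square_eq := eqOn_of_integral_eq_sub_of_hasDerivAt_le jacobi integrand_cont deriv_le
      (by rw [hzero, boundary ha, boundary hb, sub_zero]) hx
    have quotient_eq : (u' x * s x - u x * s' x) / s x = 0 := by
      simpa [(hp₀ x hx).ne'] using square_eq
    rcases div_eq_zero_iff.1 quotient_eq with hW | hsx
    · exact sub_eq_zero.1 hW
    · simp [hsx, (hz x (Ioo_subset_Icc_self hx) hsx).1]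

-- Jacobi's identity applies to `u - u m`, and by the mean-zero condition undoing the shift only
-- adds the nonnegative term `u m ^ 2 * ∫ q`.
theorem poincare_inequality (h : IsSturmLiouvilleSolution p q s s') (hm : m ∈ Ioo a b)
    (hp : Continuous p) (hq : Continuous q) (hp₀ : ∀ x ∈ Ioo a b, 0 < p x)
    (hq₀ : 0 < ∫ x in a..b, q x) (hsm : s m = 0) (hs₀ : ∀ x ∈ Ioo a b, s x = 0 → x = m)
    (hu : ∀ x, HasDerivAt u (u' x) x) (hu' : Continuous u')
    (hz : ∀ x ∈ Icc a b, s x = 0 → u x = u m ∧ s' x ≠ 0)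
    (ha : p a = 0 ∨ u a = u m) (hb : p b = 0 ∨ u b = u m)
    (hmean : ∫ x in a..b, q x * u x = 0) :
    0 ≤ ∫ x in a..b, (p x * u' x ^ 2 - q x * u x ^ 2) ∧
      (∫ x in a..b, (p x * u' x ^ 2 - q x * u x ^ 2) = 0 →
        ∃ k, ∀ x ∈ Ioo a b, u x = k * s x) := by
  have u_cont : Continuous u := continuous_iff_continuousAt.2 fun x => (hu x).continuousAt
  have shift : ∫ x in a..b, (p x * u' x ^ 2 - q x * u x ^ 2)
      = (∫ x in a..b, (p x * u' x ^ 2 - q x * (u x - u m) ^ 2)) + u m ^ 2 * ∫ x in a..b, q x := by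
    have expand : ∀ x, p x * u' x ^ 2 - q x * u x ^ 2 = p x * u' x ^ 2 - q x * (u x - u m) ^ 2
        + u m ^ 2 * q x - 2 * u m * (q x * u x) := fun x => by ring
    simp_rw [expand]
    rw [intervalIntegral.integral_sub, intervalIntegral.integral_add,
      intervalIntegral.integral_const_mul, intervalIntegral.integral_const_mul, hmean, mul_zero,
      sub_zero]
    all_goals exact Continuous.intervalIntegrable (by fun_prop) _ _
  obtain ⟨shifted_nonneg, wronskian⟩ := h.integral_nonneg_and_wronskian_eq_zero
    (u := fun x => u x - u m) (hm.1.trans hm.2).le hp hq hp₀ (fun x => (hu x).sub_const _) hu'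
    (by simpa only [sub_eq_zero] using hz) (by simpa only [sub_eq_zero] using ha)
    (by simpa only [sub_eq_zero] using hb)
  have correction_nonneg : 0 ≤ u m ^ 2 * ∫ x in a..b, q x := by positivity
  refine ⟨by linarith, fun hzero => ?_⟩
  have um_eq : u m = 0 := by
    have : u m ^ 2 * ∫ x in a..b, q x = 0 := by linarith
    simpa [hq₀.ne'] using this
  have hs'm : s' m ≠ 0 := (hz m (Ioo_subset_Icc_self hm) hsm).2
  refine exists_eqOn_const_mul_of_wronskian_eq_zero_of_zero hm (fun x _ => hu x)
    (fun x _ => h.hasDerivAt x) um_eq hsm hs'm hs₀ ?_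
  simpa only [um_eq, sub_zero] using wronskian (by linarith)

end IsSturmLiouvilleSolution

/-! ### Wirtinger's inequality and its zonal counterpart -/

theorem eq_of_periodic_of_eqOn_Ioo {E : Type*} [TopologicalSpace E] [T2Space E] {f g : ℝ → E}
    {a T : ℝ} (hT : 0 < T) (hf : Continuous f) (hg : Continuous g) (hfT : Function.Periodic f T)
    (hgT : Function.Periodic g T) (h : EqOn f g (Ioo a (a + T))) : f = g := by
  have eqOn_Icc : EqOn f g (Icc a (a + T)) := by
    simpa only [closure_Ioo (lt_add_of_pos_right a hT).ne] using h.closure hf hg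
  have pair_periodic : Function.Periodic (fun x => (f x, g x)) T := fun x => by
    simp only [hfT x, hgT x]
  funext x
  obtain ⟨y, hy, hxy⟩ := pair_periodic.exists_mem_Ico hT x a
  obtain ⟨hfxy, hgxy⟩ := Prod.mk.inj hxy
  rw [hfxy, hgxy, eqOn_Icc (Ico_subset_Icc_self hy)]

theorem exists_apply_add_eq_of_periodic_two_mul {f : ℝ → ℝ} {T : ℝ} (hf : Continuous f)
    (hper : Function.Periodic f (2 * T)) : ∃ x, f (x + T) = f x := by
  have diff_cont : Continuous fun x => f (x + T) - f x := by fun_prop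
  have diff_antiperiodic : f (T + T) - f T = -(f (0 + T) - f 0) := by
    rw [← two_mul, hper.eq, zero_add]
    ring
  suffices ∃ x, f (x + T) - f x = 0 from this.imp fun x hx => sub_eq_zero.1 hx
  rcases le_total (f (0 + T) - f 0) 0 with h | h
  · exact mem_range_of_exists_le_of_exists_ge diff_cont ⟨0, h⟩
      ⟨T, by rw [diff_antiperiodic]; linarith⟩
  · exact mem_range_of_exists_le_of_exists_ge diff_cont
      ⟨T, by rw [diff_antiperiodic]; linarith⟩ ⟨0, h⟩

theorem isSturmLiouvilleSolution_sin_sub (x₀ : ℝ) :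
    IsSturmLiouvilleSolution (fun _ => 1) (fun _ => 1) (fun x => sin (x - x₀))
      (fun x => cos (x - x₀)) where
  hasDerivAt x := (hasDerivAt_sin _).comp_sub_const x x₀
  hasDerivAt_mul_deriv x := by
    simpa only [one_mul] using (hasDerivAt_cos (x - x₀)).comp_sub_const x x₀

theorem isSturmLiouvilleSolution_cos :
    IsSturmLiouvilleSolution sin (fun θ => 2 * sin θ) cos (fun θ => -sin θ) where
  hasDerivAt := hasDerivAt_cos
  hasDerivAt_mul_deriv θ :=
    ((hasDerivAt_sin θ).mul (hasDerivAt_sin θ).neg).congr_deriv (by simp only [Pi.neg_apply]; ring)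

theorem eq_zero_or_pi_or_two_pi_of_sin_eq_zero {x : ℝ} (hx : x ∈ Icc 0 (2 * π))
    (hsin : sin x = 0) : x = 0 ∨ x = π ∨ x = 2 * π := by
  obtain ⟨n, rfl⟩ := sin_eq_zero_iff.1 hsin
  have hn₀ : (0 : ℝ) ≤ n := nonneg_of_mul_nonneg_left hx.1 pi_pos
  have hn₂ : (n : ℝ) ≤ 2 := le_of_mul_le_mul_right hx.2 pi_pos
  have hn₀' : 0 ≤ n := by exact_mod_cast hn₀
  have hn₂' : n ≤ 2 := by exact_mod_cast hn₂
  interval_cases n <;> simp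

theorem cos_ne_zero_of_sin_eq_zero {x : ℝ} (h : sin x = 0) : cos x ≠ 0 := by
  rcases sin_eq_zero_iff_cos_eq.1 h with h | h <;> simp [h]

theorem periodic_of_hasDerivAt {f f' : ℝ → ℝ} {T : ℝ} (hf : ∀ x, HasDerivAt f (f' x) x)
    (hper : Function.Periodic f T) : Function.Periodic f' T := fun x => by
  have deriv_shift := (hf (x + T)).comp_add_const x T
  rw [funext hper] at deriv_shift
  exact deriv_shift.unique (hf x)

/-- The mean of a `2π`-periodic function over a period. -/
def angularMean (f : ℝ → ℝ) : ℝ :=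
  (2 * π)⁻¹ * ∫ φ in 0..(2 * π), f φ

theorem angularMean_nonneg_iff {f : ℝ → ℝ} :
    0 ≤ angularMean f ↔ 0 ≤ ∫ φ in 0..(2 * π), f φ :=
  mul_nonneg_iff_of_pos_left (inv_pos.2 two_pi_pos)

theorem angularMean_eq_zero_iff {f : ℝ → ℝ} :
    angularMean f = 0 ↔ ∫ φ in 0..(2 * π), f φ = 0 :=
  mul_eq_zero_iff_left (inv_pos.2 two_pi_pos).ne'

theorem wirtinger_inequality {f f' : ℝ → ℝ} (hf : ∀ x, HasDerivAt f (f' x) x)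
    (hf' : Continuous f') (hper : Function.Periodic f (2 * π))
    (hmean : angularMean f = 0) :
    0 ≤ angularMean (fun x => f' x ^ 2 - f x ^ 2) ∧
      (angularMean (fun x => f' x ^ 2 - f x ^ 2) = 0 →
        ∃ α β, ∀ x, f x = α * cos x + β * sin x) := by
  rw [angularMean_nonneg_iff, angularMean_eq_zero_iff]
  rw [angularMean_eq_zero_iff] at hmean
  have f_cont : Continuous f := continuous_iff_continuousAt.2 fun x => (hf x).continuousAt
  obtain ⟨x₀, hx₀⟩ := exists_apply_add_eq_of_periodic_two_mul f_cont hper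
  have integral_shift {F : ℝ → ℝ} (hF : Function.Periodic F (2 * π)) :
      ∫ x in 0..(2 * π), F x = ∫ x in x₀..(x₀ + 2 * π), F x := by
    simpa only [zero_add] using hF.intervalIntegral_add_eq 0 x₀
  have zeros : ∀ x ∈ Icc x₀ (x₀ + 2 * π), sin (x - x₀) = 0 →
      x = x₀ ∨ x = x₀ + π ∨ x = x₀ + 2 * π := fun x hx hsin => by
    simpa only [sub_eq_iff_eq_add', add_zero] using eq_zero_or_pi_or_two_pi_of_sin_eq_zero
      ⟨by linarith [hx.1], by linarith [hx.2]⟩ hsin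
  obtain ⟨shifted_nonneg, rigid⟩ :=
    (isSturmLiouvilleSolution_sin_sub x₀).poincare_inequality (m := x₀ + π) (b := x₀ + 2 * π)
      (u := f) (u' := f') ⟨by linarith [pi_pos], by linarith [pi_pos]⟩ continuous_const
      continuous_const (fun _ _ => one_pos) (by simp [pi_pos]) (by simp)
      (fun x hx hsin => by
        rcases zeros x (Ioo_subset_Icc_self hx) hsin with rfl | h | rfl
        · exact absurd hx.1 (lt_irrefl _)
        · exact h
        · exact absurd hx.2 (lt_irrefl _))
      hf hf'
      (fun x hx hsin => ⟨by
        rcases zeros x hx hsin with rfl | rfl | rfl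
        exacts [hx₀.symm, rfl, (hper x₀).trans hx₀.symm], cos_ne_zero_of_sin_eq_zero hsin⟩)
      (.inr hx₀.symm) (.inr ((hper x₀).trans hx₀.symm))
      (by simpa only [one_mul, ← integral_shift hper] using hmean)
  have integrand_periodic : Function.Periodic (fun x => f' x ^ 2 - f x ^ 2) (2 * π) := fun x => by
    simp only [hper x, periodic_of_hasDerivAt hf hper x]
  simp only [one_mul, ← integral_shift integrand_periodic] at shifted_nonneg rigid
  refine ⟨shifted_nonneg, fun hzero => ?_⟩
  obtain ⟨k, hk⟩ := rigid hzero
  have f_eq : f = fun x => k * sin (x - x₀) :=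
    eq_of_periodic_of_eqOn_Ioo two_pi_pos f_cont (by fun_prop) hper
      (fun x => by rw [add_sub_right_comm, sin_add_two_pi]) hk
  exact ⟨-k * sin x₀, k * cos x₀, fun x => by simp only [f_eq, sin_sub]; ring⟩

theorem zonal_poincare_inequality {g g' : ℝ → ℝ} (hg : ∀ θ, HasDerivAt g (g' θ) θ)
    (hg' : Continuous g') (hmean : ∫ θ in 0..π, g θ * sin θ = 0) :
    0 ≤ ∫ θ in 0..π, (g' θ ^ 2 - 2 * g θ ^ 2) * sin θ ∧
      (∫ θ in 0..π, (g' θ ^ 2 - 2 * g θ ^ 2) * sin θ = 0 →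
        ∃ k, ∀ θ ∈ Ioo 0 π, g θ = k * cos θ) := by
  have half_pi_mem : π / 2 ∈ Ioo 0 π := ⟨by positivity, by linarith [pi_pos]⟩
  have zero_eq : ∀ θ ∈ Icc 0 π, cos θ = 0 → θ = π / 2 := fun θ hθ hcos =>
    injOn_cos hθ (Ioo_subset_Icc_self half_pi_mem) (hcos.trans cos_pi_div_two.symm)
  have integrand_eq : ∀ θ, (g' θ ^ 2 - 2 * g θ ^ 2) * sin θ
      = sin θ * g' θ ^ 2 - 2 * sin θ * g θ ^ 2 := fun θ => by ring
  simp_rw [integrand_eq]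
  refine isSturmLiouvilleSolution_cos.poincare_inequality half_pi_mem continuous_sin (by fun_prop)
    (fun θ => sin_pos_of_mem_Ioo) ?_ cos_pi_div_two
    (fun θ hθ => zero_eq θ (Ioo_subset_Icc_self hθ)) hg hg' ?_ (.inl sin_zero) (.inl sin_pi) ?_
  · rw [intervalIntegral.integral_const_mul, integral_sin]
    norm_num
  · intro θ hθ hcos
    rw [zero_eq θ hθ hcos]
    simp
  · simp_rw [mul_assoc, mul_comm (sin _)]
    rw [intervalIntegral.integral_const_mul, hmean, mul_zero]

/-! ### Integration over the sphere -/

theorem angularMean_add {f g : ℝ → ℝ} (hf : Continuous f) (hg : Continuous g) :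
    angularMean (fun φ => f φ + g φ) = angularMean f + angularMean g := by
  rw [angularMean, intervalIntegral.integral_add (hf.intervalIntegrable _ _)
    (hg.intervalIntegrable _ _), mul_add, angularMean, angularMean]

theorem angularMean_const_mul (c : ℝ) (f : ℝ → ℝ) :
    angularMean (fun φ => c * f φ) = c * angularMean f := by
  rw [angularMean, intervalIntegral.integral_const_mul, mul_left_comm, angularMean]

theorem angularMean_const (c : ℝ) : angularMean (fun _ => c) = c := by
  rw [angularMean, intervalIntegral.integral_const, sub_zero, smul_eq_mul,
    inv_mul_cancel_left₀ two_pi_pos.ne']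

theorem angularMean_sub_const {f : ℝ → ℝ} (hf : Continuous f) (c : ℝ) :
    angularMean (fun φ => f φ - c) = angularMean f - c := by
  simp only [sub_eq_add_neg, angularMean_add hf continuous_const, angularMean_const]

theorem angularMean_sq {f : ℝ → ℝ} (hf : Continuous f) :
    angularMean (fun φ => f φ ^ 2)
      = angularMean (fun φ => (f φ - angularMean f) ^ 2) + angularMean f ^ 2 := by
  have expand : (fun φ => (f φ - angularMean f) ^ 2)
      = fun φ => f φ ^ 2 + (-2 * angularMean f * f φ + angularMean f ^ 2) := by
    funext φ
    ring
  rw [expand, angularMean_add (by fun_prop) (by fun_prop), angularMean_add (by fun_prop)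
    (by fun_prop), angularMean_const_mul, angularMean_const]
  ring

theorem angularMean_sq_nonneg (f : ℝ → ℝ) : 0 ≤ angularMean (fun φ => f φ ^ 2) :=
  angularMean_nonneg_iff.2 <|
    intervalIntegral.integral_nonneg two_pi_pos.le fun _ _ => sq_nonneg _

theorem eq_zero_of_angularMean_sq_eq_zero {f : ℝ → ℝ} (hf : Continuous f)
    (hper : Function.Periodic f (2 * π)) (h : angularMean (fun φ => f φ ^ 2) = 0) (φ : ℝ) :
    f φ = 0 := by
  obtain ⟨y, hy, hφy⟩ := hper.exists_mem_Ico two_pi_pos φ 0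
  rw [zero_add] at hy
  exact hφy.trans <|
    eqOn_zero_of_integral_sq_eq_zero two_pi_pos hf (angularMean_eq_zero_iff.1 h)
      (Ico_subset_Icc_self hy)

theorem hasDerivAt_angularMean {F F' : ℝ → ℝ → ℝ} (hF : Continuous (Function.uncurry F))
    (hF' : Continuous (Function.uncurry F'))
    (hd : ∀ θ φ, HasDerivAt (fun t => F t φ) (F' θ φ) θ) (θ : ℝ) :
    HasDerivAt (fun t => angularMean (F t)) (angularMean (F' θ)) θ := by
  obtain ⟨C, hC⟩ := ((isCompact_closedBall θ 1).prod
    (isCompact_uIcc (a := 0) (b := 2 * π))).exists_bound_of_continuousOn hF'.continuousOn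
  exact (intervalIntegral.hasDerivAt_integral_of_dominated_loc_of_deriv_le (bound := fun _ => C)
    (Metric.closedBall_mem_nhds θ one_pos)
    (.of_forall fun t => (hF.uncurry_left t).aestronglyMeasurable)
    ((hF.uncurry_left θ).intervalIntegrable _ _) (hF'.uncurry_left θ).aestronglyMeasurable
    (.of_forall fun φ hφ t ht => hC (t, φ) ⟨ht, uIoc_subset_uIcc hφ⟩) (by simp)
    (.of_forall fun φ _ t _ => hd t φ)).2.const_mul _

theorem continuous_angularMean {F : ℝ → ℝ → ℝ} (hF : Continuous (Function.uncurry F)) :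
    Continuous fun θ => angularMean (F θ) :=
  (intervalIntegral.continuous_parametric_intervalIntegral_of_continuous' hF _ _).const_mul _

/-- The integral over the unit sphere, with respect to the area element `sin θ dθ dφ`, of a function
given in spherical coordinates. -/
def sphereIntegral (F : ℝ → ℝ → ℝ) : ℝ :=
  ∫ φ in 0..(2 * π), ∫ θ in 0..π, F θ φ * sin θ

theorem sphereIntegral_eq_integral_angularMean {F : ℝ → ℝ → ℝ}
    (hF : Continuous (Function.uncurry F)) :
    sphereIntegral F = 2 * π * ∫ θ in 0..π, angularMean (F θ) * sin θ := by
  have integrand_cont : Continuous (Function.uncurry fun φ θ => F θ φ * sin θ) := by fun_prop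
  have swap := MeasureTheory.intervalIntegral_intervalIntegral_swap
    (a := 0) (b := 2 * π) (c := 0) (d := π) (F := fun φ θ => F θ φ * sin θ)
    ((integrand_cont.continuousOn.integrableOn_compact
      (isCompact_uIcc.prod isCompact_uIcc)).mono_set (prod_mono uIoc_subset_uIcc uIoc_subset_uIcc))
  rw [sphereIntegral, swap, ← intervalIntegral.integral_const_mul]
  simp only [intervalIntegral.integral_mul_const, angularMean, ← mul_assoc,
    mul_inv_cancel₀ two_pi_pos.ne', one_mul]

theorem sphereIntegral_add {F G : ℝ → ℝ → ℝ} (hF : Continuous (Function.uncurry F))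
    (hG : Continuous (Function.uncurry G)) :
    sphereIntegral (fun θ φ => F θ φ + G θ φ) = sphereIntegral F + sphereIntegral G := by
  have hF_mean := continuous_angularMean hF
  have hG_mean := continuous_angularMean hG
  rw [sphereIntegral_eq_integral_angularMean (by fun_prop),
    sphereIntegral_eq_integral_angularMean hF, sphereIntegral_eq_integral_angularMean hG,
    ← mul_add, ← intervalIntegral.integral_add (Continuous.intervalIntegrable (by fun_prop) _ _)
      (Continuous.intervalIntegrable (by fun_prop) _ _)]
  simp only [← add_mul, angularMean_add (hF.uncurry_left _) (hG.uncurry_left _)]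

theorem sphereIntegral_const_mul (c : ℝ) (F : ℝ → ℝ → ℝ) :
    sphereIntegral (fun θ φ => c * F θ φ) = c * sphereIntegral F := by
  simp only [sphereIntegral, mul_assoc, intervalIntegral.integral_const_mul]

theorem sphereIntegral_const (c : ℝ) : sphereIntegral (fun _ _ => c) = 4 * π * c := by
  simp only [sphereIntegral, intervalIntegral.integral_const_mul, integral_sin, cos_zero, cos_pi,
    intervalIntegral.integral_const, smul_eq_mul]
  ring

theorem sphereIntegral_sub_const {F : ℝ → ℝ → ℝ} (hF : Continuous (Function.uncurry F)) (c : ℝ) :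
    sphereIntegral (fun θ φ => F θ φ - c) = sphereIntegral F - 4 * π * c := by
  simp only [sub_eq_add_neg]
  rw [sphereIntegral_add hF (by fun_prop), sphereIntegral_const, mul_neg]

theorem sphereIntegral_congr {F G : ℝ → ℝ → ℝ} (h : ∀ θ ∈ Ioo 0 π, ∀ φ, F θ φ = G θ φ) :
    sphereIntegral F = sphereIntegral G := by
  unfold sphereIntegral
  congr 1 with φ
  exact intervalIntegral.integral_congr_Ioo_of_le pi_pos.le fun θ hθ => by
    simp only [h θ hθ φ]

/-! ### The Poincaré inequality on the sphere -/

theorem dotProduct_sphL (a : Fin 3 → ℝ) (θ φ : ℝ) :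
    a ⬝ᵥ sphL θ φ = sin θ * (a 0 * cos φ + a 1 * sin φ) + a 2 * cos θ := by
  simp only [dotProduct, Fin.sum_univ_three, sphL, Matrix.cons_val]
  ring

/-- The function `G`, given in spherical coordinates, is `C¹` with components `Gθ` and `K` of its
gradient in the orthonormal frame of unit coordinate vectors. Thus `∂_φ G = sin θ * K`, which unlike
`K = ∂_φ G / sin θ` is meaningful at the poles, where it forces `G` to be independent of `φ`. -/
structure HasSphericalGradient (G Gθ K : ℝ → ℝ → ℝ) : Prop where
  continuous : Continuous (Function.uncurry G)
  continuous_polar : Continuous (Function.uncurry Gθ)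
  continuous_azimuthal : Continuous (Function.uncurry K)
  hasDerivAt_polar : ∀ θ φ, HasDerivAt (fun t => G t φ) (Gθ θ φ) θ
  hasDerivAt_azimuthal : ∀ θ φ, HasDerivAt (G θ) (sin θ * K θ φ) φ
  periodic : ∀ θ, Function.Periodic (G θ) (2 * π)

/-- The integrand `|∇G|² - 2 G²` of the Poincaré inequality on the sphere, whose Laplacian has
first nonzero eigenvalue `2`. -/
def poincareIntegrand (G Gθ K : ℝ → ℝ → ℝ) (θ φ : ℝ) : ℝ :=
  Gθ θ φ ^ 2 + K θ φ ^ 2 - 2 * G θ φ ^ 2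

namespace HasSphericalGradient

variable {G Gθ K : ℝ → ℝ → ℝ}

theorem sub_zonal (h : HasSphericalGradient G Gθ K) {g g' : ℝ → ℝ}
    (hg : ∀ θ, HasDerivAt g (g' θ) θ) (hg' : Continuous g') :
    HasSphericalGradient (fun θ φ => G θ φ - g θ) (fun θ φ => Gθ θ φ - g' θ) K where
  continuous := by
    have hG := h.continuous
    have g_cont : Continuous g := continuous_iff_continuousAt.2 fun θ => (hg θ).continuousAt
    fun_prop
  continuous_polar := by
    have hGθ := h.continuous_polar
    fun_prop
  continuous_azimuthal := h.continuous_azimuthal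
  hasDerivAt_polar θ φ := (h.hasDerivAt_polar θ φ).sub (hg θ)
  hasDerivAt_azimuthal θ φ := (h.hasDerivAt_azimuthal θ φ).sub_const _
  periodic θ φ := by simp only [h.periodic θ φ]

theorem continuous_poincareIntegrand (h : HasSphericalGradient G Gθ K) :
    Continuous (Function.uncurry (poincareIntegrand G Gθ K)) := by
  have hG := h.continuous
  have hGθ := h.continuous_polar
  have hK := h.continuous_azimuthal
  unfold poincareIntegrand
  fun_prop

theorem periodic_polar (h : HasSphericalGradient G Gθ K) (θ : ℝ) :
    Function.Periodic (Gθ θ) (2 * π) := fun φ =>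
  (h.hasDerivAt_polar θ (φ + 2 * π)).unique <| by
    simpa only [fun t => h.periodic t φ] using h.hasDerivAt_polar θ φ

theorem apply_eq_angularMean_of_sin_eq_zero (h : HasSphericalGradient G Gθ K) {θ : ℝ}
    (hθ : sin θ = 0) (φ : ℝ) : G θ φ = angularMean (G θ) := by
  have G_const : G θ = fun _ => G θ φ := funext fun ψ =>
    is_const_of_deriv_eq_zero (fun x => (h.hasDerivAt_azimuthal θ x).differentiableAt)
      (fun x => by rw [(h.hasDerivAt_azimuthal θ x).deriv, hθ, zero_mul]) ψ φ
  conv_rhs => rw [G_const, angularMean_const]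

theorem angularMean_poincareIntegrand_mul_sin_sq (h : HasSphericalGradient G Gθ K) (θ : ℝ) :
    sin θ * (angularMean (poincareIntegrand G Gθ K θ) * sin θ)
      = sin θ * angularMean (fun φ => 2 * cos θ * G θ φ * Gθ θ φ - sin θ * G θ φ ^ 2)
        + (angularMean (fun φ => (sin θ * Gθ θ φ - cos θ * G θ φ) ^ 2)
          + angularMean (fun φ => (sin θ * K θ φ) ^ 2 - G θ φ ^ 2)) := by
  have hG := h.continuous.uncurry_left θ
  have hGθ := h.continuous_polar.uncurry_left θ
  have hK := h.continuous_azimuthal.uncurry_left θ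
  rw [mul_comm (angularMean _), ← angularMean_const_mul, ← angularMean_const_mul,
    ← angularMean_const_mul, ← angularMean_add (by fun_prop) (by fun_prop),
    ← angularMean_add (by fun_prop) (by fun_prop)]
  congr 1 with φ
  rw [poincareIntegrand]
  linear_combination -G θ φ ^ 2 * sin_sq_add_cos_sq θ

theorem hasDerivAt_angularMean_cos_mul_sq (h : HasSphericalGradient G Gθ K) (θ : ℝ) :
    HasDerivAt (fun t => angularMean (fun φ => cos t * G t φ ^ 2))
      (angularMean (fun φ => 2 * cos θ * G θ φ * Gθ θ φ - sin θ * G θ φ ^ 2)) θ := by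
  have hG := h.continuous
  have hGθ := h.continuous_polar
  refine hasDerivAt_angularMean (F := fun t φ => cos t * G t φ ^ 2)
    (F' := fun θ φ => 2 * cos θ * G θ φ * Gθ θ φ - sin θ * G θ φ ^ 2)
    (by fun_prop) (by fun_prop) (fun t φ => ?_) θ
  exact ((hasDerivAt_cos t).mul ((h.hasDerivAt_polar t φ).pow 2)).congr_deriv (by
    simp only [Pi.pow_apply]; push_cast; ring)

theorem eq_sin_mul_of_polar_wronskian_eq_zero (h : HasSphericalGradient G Gθ K)
    (hW : ∀ θ ∈ Ioo 0 π, ∀ φ, sin θ * Gθ θ φ - cos θ * G θ φ = 0) :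
    ∀ θ ∈ Ioo 0 π, ∀ φ, G θ φ = sin θ * G (π / 2) φ := by
  intro θ hθ φ
  obtain ⟨k, hk⟩ := exists_eqOn_const_mul_of_wronskian_eq_zero (a := 0) (b := π)
    (fun θ _ => h.hasDerivAt_polar θ φ) (fun θ _ => hasDerivAt_sin θ)
    (fun θ hθ => (sin_pos_of_mem_Ioo hθ).ne') fun θ hθ => by linear_combination hW θ hθ φ
  rw [hk θ hθ, hk (π / 2) ⟨by positivity, by linarith [pi_pos]⟩, sin_pi_div_two]
  ring

theorem angularMean_deriv_le_and_rigid (h : HasSphericalGradient G Gθ K) {θ : ℝ}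
    (hθ : θ ∈ Ioo 0 π) (hmean : angularMean (G θ) = 0) :
    angularMean (fun φ => 2 * cos θ * G θ φ * Gθ θ φ - sin θ * G θ φ ^ 2)
        ≤ angularMean (poincareIntegrand G Gθ K θ) * sin θ ∧
      (angularMean (fun φ => 2 * cos θ * G θ φ * Gθ θ φ - sin θ * G θ φ ^ 2)
          = angularMean (poincareIntegrand G Gθ K θ) * sin θ →
        (∀ φ, sin θ * Gθ θ φ - cos θ * G θ φ = 0) ∧
          ∃ α β, ∀ φ, G θ φ = α * cos φ + β * sin φ) := by
  have hG := h.continuous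
  have hGθ := h.continuous_polar
  have hK := h.continuous_azimuthal
  have identity := h.angularMean_poincareIntegrand_mul_sin_sq θ
  have square_nonneg := angularMean_sq_nonneg (fun φ => sin θ * Gθ θ φ - cos θ * G θ φ)
  obtain ⟨wirtinger_nonneg, wirtinger_rigid⟩ := wirtinger_inequality
    (h.hasDerivAt_azimuthal θ) (by fun_prop) (h.periodic θ) hmean
  constructor
  · refine le_of_mul_le_mul_left ?_ (sin_pos_of_mem_Ioo hθ)
    rw [identity]
    exact le_add_of_nonneg_right (add_nonneg square_nonneg wirtinger_nonneg)
  · intro heq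
    rw [← heq, left_eq_add, add_eq_zero_iff_of_nonneg square_nonneg wirtinger_nonneg] at identity
    exact ⟨eq_zero_of_angularMean_sq_eq_zero (by fun_prop)
      (fun φ => by rw [h.periodic θ φ, h.periodic_polar θ φ]) identity.1,
      wirtinger_rigid identity.2⟩

-- The integrand dominates the derivative of `θ ↦ angularMean (cos θ * G θ ^ 2)`, and this function
-- vanishes at both poles.
theorem poincare_inequality_of_angularMean_eq_zero (h : HasSphericalGradient G Gθ K)
    (hmean : ∀ θ, angularMean (G θ) = 0) :
    0 ≤ ∫ θ in 0..π, angularMean (poincareIntegrand G Gθ K θ) * sin θ ∧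
      (∫ θ in 0..π, angularMean (poincareIntegrand G Gθ K θ) * sin θ = 0 →
        ∃ α β, ∀ θ ∈ Ioo 0 π, ∀ φ, G θ φ = sin θ * (α * cos φ + β * sin φ)) := by
  have integrand_cont : Continuous fun θ => angularMean (poincareIntegrand G Gθ K θ) * sin θ :=
    (continuous_angularMean h.continuous_poincareIntegrand).mul continuous_sin
  have latitude {θ : ℝ} (hθ : θ ∈ Ioo 0 π) := h.angularMean_deriv_le_and_rigid hθ (hmean θ)
  have boundary {θ : ℝ} (hθ : sin θ = 0) : angularMean (fun φ => cos θ * G θ φ ^ 2) = 0 := by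
    simp [h.apply_eq_angularMean_of_sin_eq_zero hθ, hmean, angularMean_const]
  constructor
  · simpa only [boundary sin_zero, boundary sin_pi, sub_zero] using
      sub_le_integral_of_hasDerivAt_le pi_pos.le (fun θ _ => h.hasDerivAt_angularMean_cos_mul_sq θ)
        integrand_cont fun θ hθ => (latitude hθ).1
  · intro hzero
    have deriv_eq := eqOn_of_integral_eq_sub_of_hasDerivAt_le
      (fun θ _ => h.hasDerivAt_angularMean_cos_mul_sq θ) integrand_cont
      (fun θ hθ => (latitude hθ).1) (by rw [hzero, boundary sin_zero, boundary sin_pi, sub_zero])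
    have half_pi_mem : π / 2 ∈ Ioo 0 π := ⟨by positivity, by linarith [pi_pos]⟩
    obtain ⟨α, β, equator⟩ := ((latitude half_pi_mem).2 (deriv_eq half_pi_mem)).2
    have G_eq := h.eq_sin_mul_of_polar_wronskian_eq_zero fun θ hθ =>
      ((latitude hθ).2 (deriv_eq hθ)).1
    exact ⟨α, β, fun θ hθ φ => by rw [G_eq θ hθ φ, equator]⟩

theorem angularMean_poincareIntegrand (h : HasSphericalGradient G Gθ K) (θ : ℝ) :
    angularMean (poincareIntegrand G Gθ K θ)
      = angularMean (fun φ => Gθ θ φ ^ 2) + angularMean (fun φ => K θ φ ^ 2)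
        + -2 * angularMean (fun φ => G θ φ ^ 2) := by
  have hG := h.continuous.uncurry_left θ
  have hGθ := h.continuous_polar.uncurry_left θ
  have hK := h.continuous_azimuthal.uncurry_left θ
  rw [← angularMean_const_mul, ← angularMean_add (by fun_prop) (by fun_prop),
    ← angularMean_add (by fun_prop) (by fun_prop)]
  congr 1 with φ
  rw [poincareIntegrand]
  ring

theorem hasDerivAt_angularMean_polar (h : HasSphericalGradient G Gθ K) (θ : ℝ) :
    HasDerivAt (fun t => angularMean (G t)) (angularMean (Gθ θ)) θ :=
  hasDerivAt_angularMean h.continuous h.continuous_polar h.hasDerivAt_polar θ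

theorem sub_angularMean (h : HasSphericalGradient G Gθ K) :
    HasSphericalGradient (fun θ φ => G θ φ - angularMean (G θ))
      (fun θ φ => Gθ θ φ - angularMean (Gθ θ)) K :=
  h.sub_zonal h.hasDerivAt_angularMean_polar (continuous_angularMean h.continuous_polar)

theorem angularMean_poincareIntegrand_eq_add_zonal (h : HasSphericalGradient G Gθ K) (θ : ℝ) :
    angularMean (poincareIntegrand G Gθ K θ)
      = angularMean (poincareIntegrand (fun θ φ => G θ φ - angularMean (G θ))
          (fun θ φ => Gθ θ φ - angularMean (Gθ θ)) K θ)
        + (angularMean (Gθ θ) ^ 2 - 2 * angularMean (G θ) ^ 2) := by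
  rw [h.angularMean_poincareIntegrand, h.sub_angularMean.angularMean_poincareIntegrand,
    angularMean_sq (h.continuous.uncurry_left θ),
    angularMean_sq (h.continuous_polar.uncurry_left θ)]
  ring

theorem poincare_inequality (h : HasSphericalGradient G Gθ K) (hmean : sphereIntegral G = 0) :
    0 ≤ sphereIntegral (poincareIntegrand G Gθ K) ∧
      (sphereIntegral (poincareIntegrand G Gθ K) = 0 →
        ∃ a : Fin 3 → ℝ, ∀ θ ∈ Ioo 0 π, ∀ φ, G θ φ = a ⬝ᵥ sphL θ φ) := by
  obtain ⟨oscillation_nonneg, oscillation_rigid⟩ :=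
    h.sub_angularMean.poincare_inequality_of_angularMean_eq_zero fun θ => by
      rw [angularMean_sub_const (h.continuous.uncurry_left θ), sub_self]
  obtain ⟨zonal_nonneg, zonal_rigid⟩ := zonal_poincare_inequality h.hasDerivAt_angularMean_polar
    (continuous_angularMean h.continuous_polar) (by
      simpa [sphereIntegral_eq_integral_angularMean h.continuous, pi_ne_zero] using hmean)
  have split : sphereIntegral (poincareIntegrand G Gθ K) = 2 * π *
      ((∫ θ in 0..π, angularMean (poincareIntegrand (fun θ φ => G θ φ - angularMean (G θ))
          (fun θ φ => Gθ θ φ - angularMean (Gθ θ)) K θ) * sin θ)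
        + ∫ θ in 0..π, (angularMean (Gθ θ) ^ 2 - 2 * angularMean (G θ) ^ 2) * sin θ) := by
    have oscillation_cont :=
      continuous_angularMean h.sub_angularMean.continuous_poincareIntegrand
    have mean_cont := continuous_angularMean h.continuous
    have mean_polar_cont := continuous_angularMean h.continuous_polar
    rw [sphereIntegral_eq_integral_angularMean h.continuous_poincareIntegrand,
      ← intervalIntegral.integral_add]
    · simp only [← add_mul, ← h.angularMean_poincareIntegrand_eq_add_zonal]
    all_goals exact Continuous.intervalIntegrable (by fun_prop) _ _
  rw [split]
  refine ⟨by positivity, fun hzero => ?_⟩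
  rw [mul_eq_zero_iff_left two_pi_pos.ne',
    add_eq_zero_iff_of_nonneg oscillation_nonneg zonal_nonneg] at hzero
  obtain ⟨α, β, hαβ⟩ := oscillation_rigid hzero.1
  obtain ⟨γ, hγ⟩ := zonal_rigid hzero.2
  refine ⟨![α, β, γ], fun θ hθ φ => ?_⟩
  simp only [dotProduct_sphL, Matrix.cons_val]
  linear_combination hαβ θ hθ φ + hγ θ hθ

end HasSphericalGradient

/-! ### Minkowski's inequality -/

theorem hasSphericalGradient_dotProduct_sphL (a : Fin 3 → ℝ) :
    HasSphericalGradient (fun θ φ => a ⬝ᵥ sphL θ φ)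
      (fun θ φ => cos θ * (a 0 * cos φ + a 1 * sin φ) - a 2 * sin θ)
      (fun _ φ => a 1 * cos φ - a 0 * sin φ) := by
  simp only [dotProduct_sphL]
  exact
    { continuous := by fun_prop
      continuous_polar := by fun_prop
      continuous_azimuthal := by fun_prop
      hasDerivAt_polar := fun θ φ =>
        (((hasDerivAt_sin θ).mul_const _).add ((hasDerivAt_cos θ).const_mul _)).congr_deriv
          (by ring)
      hasDerivAt_azimuthal := fun θ φ =>
        (((((hasDerivAt_cos φ).const_mul _).add ((hasDerivAt_sin φ).const_mul _)).const_mul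
          _).add_const _).congr_deriv (by ring)
      periodic := fun θ φ => by simp only [cos_add_two_pi, sin_add_two_pi] }

theorem sphereIntegral_dotProduct_sphL (a : Fin 3 → ℝ) :
    sphereIntegral (fun θ φ => a ⬝ᵥ sphL θ φ) = 0 := by
  have latitude (θ : ℝ) : angularMean (fun φ => a ⬝ᵥ sphL θ φ) = a 2 * cos θ := by
    simp only [dotProduct_sphL]
    rw [angularMean_add (by fun_prop) (by fun_prop), angularMean_const, angularMean_const_mul,
      angularMean_add (by fun_prop) (by fun_prop), angularMean_const_mul, angularMean_const_mul]
    simp [angularMean]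
  rw [sphereIntegral_eq_integral_angularMean (hasSphericalGradient_dotProduct_sphL a).continuous]
  simp only [latitude, mul_assoc, intervalIntegral.integral_const_mul]
  simp [mul_comm (cos _), integral_sin_mul_cos₁]

theorem integral_meridian_poincareIntegrand (u v γ : ℝ) :
    ∫ θ in 0..π,
        ((cos θ * u - γ * sin θ) ^ 2 + v ^ 2 - 2 * (sin θ * u + γ * cos θ) ^ 2) * sin θ
      = 2 * (v ^ 2 - u ^ 2) := by
  have primitive : ∀ θ ∈ uIcc 0 π, HasDerivAt
      (fun θ => (u ^ 2 - γ ^ 2) * (sin θ ^ 2 * cos θ) + (u ^ 2 - v ^ 2) * cos θ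
        - 2 * u * γ * sin θ ^ 3)
      (((cos θ * u - γ * sin θ) ^ 2 + v ^ 2 - 2 * (sin θ * u + γ * cos θ) ^ 2) * sin θ) θ := by
    intro θ _
    refine ((((((hasDerivAt_sin θ).pow 2).mul (hasDerivAt_cos θ)).const_mul _).add
      ((hasDerivAt_cos θ).const_mul _)).sub
      (((hasDerivAt_sin θ).pow 3).const_mul _)).congr_deriv ?_
    simp only [Pi.pow_apply]
    push_cast
    linear_combination u ^ 2 * sin θ * sin_sq_add_cos_sq θ
  rw [intervalIntegral.integral_eq_sub_of_hasDerivAt primitive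
    (Continuous.intervalIntegrable (by fun_prop) _ _)]
  simp only [sin_zero, cos_zero, sin_pi, cos_pi]
  ring

theorem sphereIntegral_poincareIntegrand_dotProduct_sphL (a : Fin 3 → ℝ) :
    sphereIntegral (poincareIntegrand (fun θ φ => a ⬝ᵥ sphL θ φ)
      (fun θ φ => cos θ * (a 0 * cos φ + a 1 * sin φ) - a 2 * sin θ)
      (fun _ φ => a 1 * cos φ - a 0 * sin φ)) = 0 := by
  have primitive : ∀ φ ∈ uIcc 0 (2 * π), HasDerivAt
      (fun φ => (a 0 * cos φ + a 1 * sin φ) * (a 1 * cos φ - a 0 * sin φ))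
      ((a 1 * cos φ - a 0 * sin φ) ^ 2 - (a 0 * cos φ + a 1 * sin φ) ^ 2) φ := fun φ _ =>
    ((((hasDerivAt_cos φ).const_mul _).add ((hasDerivAt_sin φ).const_mul _)).mul
      (((hasDerivAt_cos φ).const_mul _).sub ((hasDerivAt_sin φ).const_mul _))).congr_deriv (by
        simp only [Pi.add_apply, Pi.sub_apply]; ring)
  simp only [sphereIntegral, poincareIntegrand, dotProduct_sphL,
    integral_meridian_poincareIntegrand]
  rw [intervalIntegral.integral_const_mul, intervalIntegral.integral_eq_sub_of_hasDerivAt primitive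
    (Continuous.intervalIntegrable (by fun_prop) _ _)]
  simp

/-- The surface area of the convex surface with stutzfunction `F`, in spherical coordinates. -/
def surfaceArea (F : ℝ → ℝ → ℝ) : ℝ :=
  sphereIntegral fun θ φ => F θ φ ^ 2 - (1 / 2) * ((deriv (fun t => F t φ) θ) ^ 2 +
    (1 / sin θ ^ 2) * (deriv (fun p => F θ p) φ) ^ 2)

namespace HasSphericalGradient

variable {F Fθ K : ℝ → ℝ → ℝ}

theorem polar_eq_and_azimuthal_eq {G Gθ L : ℝ → ℝ → ℝ} (hF : HasSphericalGradient F Fθ K)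
    (hG : HasSphericalGradient G Gθ L) (heq : ∀ θ ∈ Ioo 0 π, ∀ φ, F θ φ = G θ φ) {θ : ℝ}
    (hθ : θ ∈ Ioo 0 π) (φ : ℝ) : Fθ θ φ = Gθ θ φ ∧ K θ φ = L θ φ := by
  constructor
  · exact (hF.hasDerivAt_polar θ φ).unique ((hG.hasDerivAt_polar θ φ).congr_of_eventuallyEq
      (eventually_of_mem (Ioo_mem_nhds hθ.1 hθ.2) fun t ht => heq t ht φ))
  · refine mul_left_cancel₀ (sin_pos_of_mem_Ioo hθ).ne' ?_
    exact (hF.hasDerivAt_azimuthal θ φ).unique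
      (funext (heq θ hθ) ▸ hG.hasDerivAt_azimuthal θ φ)

theorem surfaceArea_eq (h : HasSphericalGradient F Fθ K) :
    surfaceArea F
      = sphereIntegral fun θ φ => F θ φ ^ 2 - (1 / 2) * (Fθ θ φ ^ 2 + K θ φ ^ 2) := by
  refine sphereIntegral_congr fun θ hθ φ => ?_
  have sin_ne_zero := (sin_pos_of_mem_Ioo hθ).ne'
  rw [(h.hasDerivAt_polar θ φ).deriv, (h.hasDerivAt_azimuthal θ φ).deriv]
  field_simp

theorem sub_const (h : HasSphericalGradient F Fθ K) (c : ℝ) :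
    HasSphericalGradient (fun θ φ => F θ φ - c) Fθ K := by
  simpa only [sub_zero] using h.sub_zonal (fun θ => hasDerivAt_const θ c) continuous_const

theorem minkowski_deficit_eq (h : HasSphericalGradient F Fθ K) (c : ℝ) :
    sphereIntegral F ^ 2 - 4 * π * surfaceArea F
      = 2 * π * sphereIntegral (poincareIntegrand (fun θ φ => F θ φ - c) Fθ K)
        + (sphereIntegral F - 4 * π * c) ^ 2 := by
  have hF := h.continuous
  have hFθ := h.continuous_polar
  have hK := h.continuous_azimuthal
  have expand : poincareIntegrand (fun θ φ => F θ φ - c) Fθ K = fun θ φ =>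
      -2 * (F θ φ ^ 2 - (1 / 2) * (Fθ θ φ ^ 2 + K θ φ ^ 2)) + (4 * c * F θ φ + -2 * c ^ 2) := by
    funext θ φ
    rw [poincareIntegrand]
    ring
  rw [expand, sphereIntegral_add (by fun_prop) (by fun_prop),
    sphereIntegral_add (by fun_prop) (by fun_prop), sphereIntegral_const_mul,
    sphereIntegral_const_mul, sphereIntegral_const, ← h.surfaceArea_eq]
  ring

theorem minkowski_deficit_eq_zero (h : HasSphericalGradient F Fθ K) {c : ℝ} {a : Fin 3 → ℝ}
    (hF : ∀ θ ∈ Ioo 0 π, ∀ φ, F θ φ = c + a ⬝ᵥ sphL θ φ) :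
    sphereIntegral F ^ 2 - 4 * π * surfaceArea F = 0 := by
  have sub_eq : ∀ θ ∈ Ioo 0 π, ∀ φ, F θ φ - c = a ⬝ᵥ sphL θ φ := fun θ hθ φ => by
    rw [hF θ hθ φ, add_sub_cancel_left]
  have mean_eq : sphereIntegral F - 4 * π * c = 0 := by
    rw [← sphereIntegral_sub_const h.continuous, sphereIntegral_congr sub_eq,
      sphereIntegral_dotProduct_sphL]
  rw [h.minkowski_deficit_eq c, mean_eq, sphereIntegral_congr
    (G := poincareIntegrand (fun θ φ => a ⬝ᵥ sphL θ φ)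
      (fun θ φ => cos θ * (a 0 * cos φ + a 1 * sin φ) - a 2 * sin θ)
      (fun _ φ => a 1 * cos φ - a 0 * sin φ)), sphereIntegral_poincareIntegrand_dotProduct_sphL]
  · ring
  · intro θ hθ φ
    obtain ⟨polar_eq, azimuthal_eq⟩ := (h.sub_const c).polar_eq_and_azimuthal_eq
      (hasSphericalGradient_dotProduct_sphL a) sub_eq hθ φ
    rw [poincareIntegrand, poincareIntegrand, sub_eq θ hθ φ, polar_eq, azimuthal_eq]

theorem minkowski_inequality (h : HasSphericalGradient F Fθ K) :
    4 * π * surfaceArea F ≤ sphereIntegral F ^ 2 ∧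
      (sphereIntegral F ^ 2 = 4 * π * surfaceArea F ↔ ∃ (c : ℝ) (a : Fin 3 → ℝ),
        ∀ θ ∈ Ioo 0 π, ∀ φ, F θ φ = c + a ⬝ᵥ sphL θ φ) := by
  set c := sphereIntegral F / (4 * π) with hc
  have mean_eq : sphereIntegral F - 4 * π * c = 0 := by
    rw [hc]
    field_simp
    ring
  have deficit_eq := h.minkowski_deficit_eq c
  rw [mean_eq, zero_pow two_ne_zero, add_zero] at deficit_eq
  obtain ⟨nonneg, rigid⟩ := (h.sub_const c).poincare_inequality
    (by rw [sphereIntegral_sub_const h.continuous, mean_eq])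
  rw [← sub_nonneg, ← sub_eq_zero, deficit_eq]
  refine ⟨by positivity, fun hzero => ?_, fun ⟨c, a, hF⟩ => ?_⟩
  · obtain ⟨a, ha⟩ := rigid ((mul_eq_zero_iff_left two_pi_pos.ne').1 hzero)
    exact ⟨c, a, fun θ hθ φ => by rw [← ha θ hθ φ, add_sub_cancel]⟩
  · rw [← deficit_eq, h.minkowski_deficit_eq_zero hF]

end HasSphericalGradient

theorem sphL_ne_zero (θ φ : ℝ) : sphL θ φ ≠ 0 := by
  have norm_sq_eq : sphL θ φ ⬝ᵥ sphL θ φ = 1 := by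
    rw [dotProduct_sphL]
    simp only [sphL, Matrix.cons_val]
    linear_combination sin θ ^ 2 * sin_sq_add_cos_sq φ + sin_sq_add_cos_sq θ
  intro hzero
  simp [hzero] at norm_sq_eq

/-- The unit coordinate vector `∂_θ ℓ(θ,φ)`, tangent to the meridian. -/
def polarUnitVector (θ φ : ℝ) : Fin 3 → ℝ :=
  ![cos θ * cos φ, cos θ * sin φ, -sin θ]

/-- The unit coordinate vector `∂_φ ℓ(θ,φ) / sin θ`, tangent to the circle of latitude. -/
def azimuthalUnitVector (φ : ℝ) : Fin 3 → ℝ :=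
  ![-sin φ, cos φ, 0]

theorem continuous_sphL : Continuous (Function.uncurry sphL) := by
  unfold sphL
  fun_prop

theorem continuous_polarUnitVector : Continuous (Function.uncurry polarUnitVector) := by
  unfold polarUnitVector
  fun_prop

theorem continuous_azimuthalUnitVector : Continuous azimuthalUnitVector := by
  unfold azimuthalUnitVector
  fun_prop

theorem hasDerivAt_sphL_polar (θ φ : ℝ) :
    HasDerivAt (fun t => sphL t φ) (polarUnitVector θ φ) θ := by
  rw [hasDerivAt_pi, Fin.forall_fin_succ, Fin.forall_fin_two]
  exact ⟨(hasDerivAt_sin θ).mul_const _, (hasDerivAt_sin θ).mul_const _, hasDerivAt_cos θ⟩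

theorem hasDerivAt_sphL_azimuthal (θ φ : ℝ) :
    HasDerivAt (sphL θ) (sin θ • azimuthalUnitVector φ) φ := by
  rw [hasDerivAt_pi, Fin.forall_fin_succ, Fin.forall_fin_two]
  exact ⟨(hasDerivAt_cos φ).const_mul _, (hasDerivAt_sin φ).const_mul _,
    (hasDerivAt_const φ (cos θ)).congr_deriv (mul_zero _).symm⟩

theorem hasSphericalGradient_Hsph {H : (Fin 3 → ℝ) → ℝ} (hH : ContDiffOn ℝ 1 H {v | v ≠ 0}) :
    HasSphericalGradient (Hsph H)
      (fun θ φ => fderiv ℝ H (sphL θ φ) (polarUnitVector θ φ))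
      (fun θ φ => fderiv ℝ H (sphL θ φ) (azimuthalUnitVector φ)) := by
  have hasFDerivAt (θ φ : ℝ) : HasFDerivAt H (fderiv ℝ H (sphL θ φ)) (sphL θ φ) :=
    ((hH.differentiableOn one_ne_zero).differentiableAt
      (isOpen_ne.mem_nhds (sphL_ne_zero θ φ))).hasFDerivAt
  have fderiv_cont : Continuous fun p : ℝ × ℝ => fderiv ℝ H (sphL p.1 p.2) :=
    (hH.continuousOn_fderiv_of_isOpen isOpen_ne le_rfl).comp_continuous continuous_sphL
      fun p => sphL_ne_zero p.1 p.2
  exact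
    { continuous := hH.continuousOn.comp_continuous continuous_sphL fun p => sphL_ne_zero p.1 p.2
      continuous_polar := fderiv_cont.clm_apply continuous_polarUnitVector
      continuous_azimuthal :=
        fderiv_cont.clm_apply (continuous_azimuthalUnitVector.comp continuous_snd)
      hasDerivAt_polar := fun θ φ =>
        (hasFDerivAt θ φ).comp_hasDerivAt θ (hasDerivAt_sphL_polar θ φ)
      hasDerivAt_azimuthal := fun θ φ =>
        ((hasFDerivAt θ φ).comp_hasDerivAt φ (hasDerivAt_sphL_azimuthal θ φ)).congr_deriv
          (map_smul _ _ _)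
      periodic := fun θ φ => by simp only [Hsph, sphL, cos_add_two_pi, sin_add_two_pi] }

theorem stmt8_general (H : (Fin 3 → ℝ) → ℝ) (hH : ContDiffOn ℝ 1 H {v | v ≠ 0}) :
    sphereIntegral (Hsph H) ^ 2 ≥ 4 * π * surfaceArea (Hsph H) ∧
      (sphereIntegral (Hsph H) ^ 2 = 4 * π * surfaceArea (Hsph H) ↔
        ∃ (c : ℝ) (a : Fin 3 → ℝ), ∀ θ ∈ Ioo 0 π, ∀ φ, Hsph H θ φ = c + a ⬝ᵥ sphL θ φ) :=
  (hasSphericalGradient_Hsph hH).minkowski_inequality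

/-- Minkowski's inequality via the stutzfunction (Blaschke's proof): with
`M = ∫∫ H sinθ` and `A = ∫∫ (H² − (1/2)((∂_θH)² + (1/sin²θ)(∂_φH)²)) sinθ`,
one has `M² ≥ 4πA` with equality iff `H(θ,φ) = c + a·ℓ(θ,φ)`. -/
theorem stmt8 (H : (Fin 3 → ℝ) → ℝ)
    (hH : ContDiffOn ℝ (⊤ : ℕ∞) H {v : Fin 3 → ℝ | v ≠ 0})
    (hhom : ∀ v : Fin 3 → ℝ, v ≠ 0 → ∀ t : ℝ, 0 < t → H (t • v) = H v)
    (M A : ℝ)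
    (hM : M = ∫ φ in (0:ℝ)..(2 * Real.pi), ∫ θ in (0:ℝ)..Real.pi,
      Hsph H θ φ * Real.sin θ)
    (hA : A = ∫ φ in (0:ℝ)..(2 * Real.pi), ∫ θ in (0:ℝ)..Real.pi,
      (Hsph H θ φ ^ 2 - (1 / 2) * ((deriv (fun t => Hsph H t φ) θ) ^ 2 +
        (1 / Real.sin θ ^ 2) * (deriv (fun p => Hsph H θ p) φ) ^ 2)) * Real.sin θ) :
    M ^ 2 ≥ 4 * Real.pi * A ∧
    (M ^ 2 = 4 * Real.pi * A ↔ ∃ (c : ℝ) (a : Fin 3 → ℝ),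
      ∀ θ ∈ Set.Ioo 0 Real.pi, ∀ φ : ℝ,
        Hsph H θ φ = c + ∑ i, a i * sphL θ φ i) := by
  subst hM hA
  exact stmt8_general H (hH.of_le (by exact_mod_cast le_top))
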